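/- (Theorem 4: convergence of CDSGD with diminishing step size, nonconvex case.) Let (Ω, ℱ, P) be a probability space with filtration (ℱ_k)_{k∈ℕ}. Let V : ℝ^N → ℝ be differentiable with ∇V Lipschitz continuous with constant γ' > 0 and bounded below by V_inf ∈ ℝ. Let (α_k)_{k≥1} be a positive nonincreasing sequence with α_k·γ'·Q̂_m ≤ ζ₁ for all k, and let (X_k), (G_k) be random vectors with X₁ = x₁ ∈ ℝ^N almost surely, X_k ℱ_k-measurable, G_k ℱ_{k+1}-measurable with E[‖G_k‖²] < ∞, and X_{k+1} = X_k − α_k·G_k. Assume constants ζ₁ > 0, Q̂ ≥ 0, Q̂_m ≥ ζ₁² such that almost surely ⟨∇V(X_k), E[G_k | ℱ_k]⟩ ≥ ζ₁·‖∇V(X_k)‖² and E[‖G_k‖² | ℱ_k] ≤ Q̂ + Q̂_m·‖∇V(X_k)‖² for all k. Then for every m ≥ 1, Σ_{k=1}^{m} α_k·E[‖∇V(X_k)‖²] ≤ 2·(V(x₁) − V_inf)/ζ₁ + (γ'·Q̂/ζ₁)·Σ_{k=1}^{m} α_k². -/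

import Mathlib

open MeasureTheory Filter
open scoped RealInnerProductSpace BigOperators

/-! Since `∇V` is Lipschitz, `V` differs from its linearization by at most `γ' / 2 * ‖d‖ ^ 2`, so
one step `X - α • G` increases `E[V]` by at most `-α E⟪∇V X, G⟫ + γ' / 2 * α ^ 2 E‖G‖ ^ 2`.
Conditioning on the past bounds the first term by `-α ζ₁ E‖∇V X‖ ^ 2` and the second by
`γ' / 2 * α ^ 2 (Q + Qm E‖∇V X‖ ^ 2)`; the step-size condition `α γ' Qm ≤ ζ₁` lets half of the
first absorb the `Qm` part of the second. Telescoping these one-step bounds and bounding the final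
`E[V]` below by `Vinf` gives the estimate. -/

open scoped NNReal

section Smooth

variable {E F : Type*} [NormedAddCommGroup E] [NormedSpace ℝ E] [NormedAddCommGroup F]
  [NormedSpace ℝ F] {f : E → F} {K : ℝ≥0}

theorem norm_image_add_sub_fderiv_le_of_lipschitzWith_fderiv (hf : Differentiable ℝ f)
    (hf' : LipschitzWith K (fderiv ℝ f)) (x d : E) :
    ‖f (x + d) - f x - fderiv ℝ f x d‖ ≤ K / 2 * ‖d‖ ^ 2 := by
  let remainder : ℝ → F := fun t => f (x + t • d) - f x - t • fderiv ℝ f x d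
  have hasDerivAt_remainder (t : ℝ) :
      HasDerivAt remainder (fderiv ℝ f (x + t • d) d - fderiv ℝ f x d) t := by
    have hline : HasDerivAt (fun t : ℝ => x + t • d) d t := by
      simpa only [id_eq, one_smul] using ((hasDerivAt_id t).smul_const d).const_add x
    have hlinear : HasDerivAt (fun t : ℝ => t • fderiv ℝ f x d) (fderiv ℝ f x d) t := by
      simpa only [id_eq, one_smul] using (hasDerivAt_id t).smul_const (fderiv ℝ f x d)
    exact (((hf _).hasFDerivAt.comp_hasDerivAt t hline).sub_const (f x)).sub hlinear
  have hasDerivAt_bound (t : ℝ) :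
      HasDerivAt (fun t : ℝ => K / 2 * ‖d‖ ^ 2 * t ^ 2) (K * ‖d‖ ^ 2 * t) t :=
    ((hasDerivAt_pow 2 t).const_mul (K / 2 * ‖d‖ ^ 2)).congr_deriv (by push_cast; ring)
  have norm_deriv_le (t : ℝ) (ht : t ∈ Set.Ico (0 : ℝ) 1) :
      ‖fderiv ℝ f (x + t • d) d - fderiv ℝ f x d‖ ≤ K * ‖d‖ ^ 2 * t := calc
    _ ≤ ‖fderiv ℝ f (x + t • d) - fderiv ℝ f x‖ * ‖d‖ :=
      (fderiv ℝ f (x + t • d) - fderiv ℝ f x).le_opNorm d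
    _ ≤ K * ‖x + t • d - x‖ * ‖d‖ := by gcongr; exact hf'.norm_sub_le _ _
    _ = K * ‖d‖ ^ 2 * t := by
      rw [add_sub_cancel_left, norm_smul, Real.norm_of_nonneg ht.1]; ring
  have norm_remainder_le := image_norm_le_of_norm_deriv_right_le_deriv_boundary
    (fun t _ => (hasDerivAt_remainder t).continuousAt.continuousWithinAt)
    (fun t _ => (hasDerivAt_remainder t).hasDerivWithinAt) (by simp [remainder])
    hasDerivAt_bound norm_deriv_le (Set.right_mem_Icc.2 zero_le_one)
  simpa only [remainder, one_smul, one_pow, mul_one] using norm_remainder_le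

end Smooth

section Gradient

variable {E : Type*} [NormedAddCommGroup E] [InnerProductSpace ℝ E] [CompleteSpace E]
  {V : E → ℝ} {K : ℝ≥0}

theorem lipschitzWith_fderiv_iff_lipschitzWith_gradient {𝕜 F : Type*} [RCLike 𝕜]
    [NormedAddCommGroup F] [InnerProductSpace 𝕜 F] [CompleteSpace F] {f : F → 𝕜} :
    LipschitzWith K (fderiv 𝕜 f) ↔ LipschitzWith K (gradient f) := by
  rw [← toDual_comp_gradient]
  exact (InnerProductSpace.toDual 𝕜 F).isometry.lipschitzWith_iff K

theorem image_sub_smul_le_of_lipschitzWith_gradient (hV : Differentiable ℝ V)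
    (hLip : LipschitzWith K (gradient V)) (x g : E) (a : ℝ) :
    V (x - a • g) ≤ V x - a * ⟪gradient V x, g⟫ + K / 2 * a ^ 2 * ‖g‖ ^ 2 := by
  have hremainder := le_of_abs_le <| norm_image_add_sub_fderiv_le_of_lipschitzWith_fderiv hV
    (lipschitzWith_fderiv_iff_lipschitzWith_gradient.2 hLip) x (-(a • g))
  rw [← sub_eq_add_neg, ← toDual_gradient, InnerProductSpace.toDual_apply_apply, inner_neg_right,
    real_inner_smul_right, norm_neg, norm_smul, mul_pow, Real.norm_eq_abs, sq_abs] at hremainder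
  linarith

end Gradient

section Integrability

variable {Ω E F : Type*} {m0 : MeasurableSpace Ω} {P : Measure Ω} [IsFiniteMeasure P]
  [NormedAddCommGroup E] [NormedAddCommGroup F] {X : Ω → E} {K : ℝ≥0}

theorem memLp_comp_of_lipschitzWith {p : ENNReal} {g : E → F} (hg : LipschitzWith K g)
    (hX : MemLp X p P) : MemLp (g ∘ X) p P := by
  have hcentered : LipschitzWith K fun x => g x - g 0 :=
    .of_dist_le_mul fun x y => by simpa only [dist_sub_right] using hg.dist_le_mul x y
  convert! (hcentered.comp_memLp (sub_self _) hX).add (memLp_const (g 0)) using 1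
  ext ω
  simp

theorem integrable_comp_of_lipschitzWith_fderiv [NormedSpace ℝ E] [NormedSpace ℝ F] {f : E → F}
    (hf : Differentiable ℝ f) (hf' : LipschitzWith K (fderiv ℝ f)) (hX : MemLp X 2 P) :
    Integrable (fun ω => f (X ω)) P := by
  have hlinear : Integrable (fun ω => f 0 + fderiv ℝ f 0 (X ω)) P :=
    (integrable_const _).add ((fderiv ℝ f 0).integrable_comp (hX.integrable one_le_two))
  have hremainder : Integrable (fun ω => f (X ω) - (f 0 + fderiv ℝ f 0 (X ω))) P := by
    refine (hX.integrable_norm_pow two_ne_zero |>.const_mul (K / 2 : ℝ)).mono'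
      ((hf.continuous.comp_aestronglyMeasurable hX.1).sub hlinear.1) (ae_of_all _ fun ω => ?_)
    simpa only [zero_add, sub_sub] using
      norm_image_add_sub_fderiv_le_of_lipschitzWith_fderiv hf hf' 0 (X ω)
  simpa only [Pi.add_def, sub_add_cancel] using hremainder.add hlinear

end Integrability

theorem memLp_of_ae_eq_sub_smul {Ω E : Type*} {m0 : MeasurableSpace Ω} {P : Measure Ω}
    [NormedAddCommGroup E] [NormedSpace ℝ E] {p : ENNReal} {X G : ℕ → Ω → E} {α : ℕ → ℝ}
    (hX1 : MemLp (X 1) p P) (hG : ∀ k, 1 ≤ k → MemLp (G k) p P)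
    (hupdate : ∀ k, 1 ≤ k → ∀ᵐ ω ∂P, X (k + 1) ω = X k ω - α k • G k ω) {k : ℕ} (hk : 1 ≤ k) :
    MemLp (X k) p P := by
  induction k, hk using Nat.le_induction with
  | base => exact hX1
  | succ k hk ih =>
    exact (ih.sub ((hG k hk).const_smul (α k))).ae_eq (EventuallyEq.symm (hupdate k hk))

theorem integral_comp_of_ae_eq_const {Ω E F : Type*} {m0 : MeasurableSpace Ω} {P : Measure Ω}
    [IsProbabilityMeasure P] [NormedAddCommGroup F] [NormedSpace ℝ F] [CompleteSpace F]
    (f : E → F) {X : Ω → E} {x : E} (hX : ∀ᵐ ω ∂P, X ω = x) : ∫ ω, f (X ω) ∂P = f x := by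
  rw [integral_congr_ae (hX.mono fun _ hω => congrArg f hω), integral_const, probReal_univ,
    one_smul]

section Moments

variable {Ω E : Type*} {m m0 : MeasurableSpace Ω} {P : Measure Ω} [NormedAddCommGroup E]
  [InnerProductSpace ℝ E]

theorem integrable_inner_of_memLp_two {f g : Ω → E} (hf : MemLp f 2 P) (hg : MemLp g 2 P) :
    Integrable (fun ω => ⟪f ω, g ω⟫) P :=
  (hf.norm.integrable_mul hg.norm).mono' (hf.1.inner hg.1) <|
    ae_of_all _ fun ω => norm_inner_le_norm (f ω) (g ω)

theorem integral_inner_condExp [CompleteSpace E] [IsFiniteMeasure P] (hm : m ≤ m0) {f g : Ω → E}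
    (hfm : StronglyMeasurable[m] f) (hf : MemLp f 2 P) (hg : MemLp g 2 P) :
    ∫ ω, ⟪f ω, (P[g | m]) ω⟫ ∂P = ∫ ω, ⟪f ω, g ω⟫ ∂P := by
  have hpull : P[fun ω => ⟪f ω, g ω⟫ | m] =ᵐ[P] fun ω => ⟪f ω, (P[g | m]) ω⟫ :=
    condExp_bilin_of_stronglyMeasurable_left (innerSL ℝ) hfm
      (integrable_inner_of_memLp_two hf hg) (hg.integrable one_le_two)
  rw [← integral_congr_ae hpull, integral_condExp hm]

theorem integral_comp_sub_smul_le_of_lipschitzWith_gradient [CompleteSpace E] [IsFiniteMeasure P]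
    {V : E → ℝ} {K : ℝ≥0} (hV : Differentiable ℝ V) (hLip : LipschitzWith K (gradient V))
    {X G : Ω → E} (hX : MemLp X 2 P) (hG : MemLp G 2 P) (a : ℝ) :
    ∫ ω, V (X ω - a • G ω) ∂P ≤
      ∫ ω, V (X ω) ∂P - a * ∫ ω, ⟪gradient V (X ω), G ω⟫ ∂P
        + K / 2 * a ^ 2 * ∫ ω, ‖G ω‖ ^ 2 ∂P := by
  have hVint {Y : Ω → E} (hY : MemLp Y 2 P) : Integrable (fun ω => V (Y ω)) P :=
    integrable_comp_of_lipschitzWith_fderiv hV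
      (lipschitzWith_fderiv_iff_lipschitzWith_gradient.2 hLip) hY
  have hinner : Integrable (fun ω => a * ⟪gradient V (X ω), G ω⟫) P :=
    (integrable_inner_of_memLp_two (memLp_comp_of_lipschitzWith hLip hX) hG).const_mul a
  have hdecrease : Integrable (fun ω => V (X ω) - a * ⟪gradient V (X ω), G ω⟫) P :=
    (hVint hX).sub hinner
  have hsq : Integrable (fun ω => K / 2 * a ^ 2 * ‖G ω‖ ^ 2) P :=
    (hG.integrable_norm_pow two_ne_zero).const_mul _
  rw [← integral_const_mul, ← integral_const_mul, ← integral_sub (hVint hX) hinner,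
    ← integral_add hdecrease hsq]
  exact integral_mono (hVint (hX.sub (hG.const_smul a))) (hdecrease.add hsq)
    fun ω => image_sub_smul_le_of_lipschitzWith_gradient hV hLip (X ω) (G ω) a

end Moments

/-- `G` is a stochastic Lyapunov gradient with constants `ζ`, `Q`, `Qm`: a square-integrable
surrogate for the random vector `g` whose conditional mean given the past `m` is aligned with `g`
and whose conditional second moment grows at most quadratically in `‖g‖`. In the algorithm `g` is
the gradient of the Lyapunov function at the current iterate. -/
structure IsStochasticLyapunovGradient {Ω E : Type*} {m0 : MeasurableSpace Ω}
    [NormedAddCommGroup E] [InnerProductSpace ℝ E] [CompleteSpace E] (P : Measure Ω)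
    (m : MeasurableSpace Ω) (g G : Ω → E) (ζ Q Qm : ℝ) : Prop where
  le : m ≤ m0
  stronglyMeasurable : StronglyMeasurable[m] g
  memLp : MemLp G 2 P
  le_inner_condExp : ∀ᵐ ω ∂P, ζ * ‖g ω‖ ^ 2 ≤ ⟪g ω, (P[G | m]) ω⟫
  condExp_sq_norm_le : ∀ᵐ ω ∂P, (P[fun ω' => ‖G ω'‖ ^ 2 | m]) ω ≤ Q + Qm * ‖g ω‖ ^ 2

namespace IsStochasticLyapunovGradient

variable {Ω E : Type*} {m m0 : MeasurableSpace Ω} {P : Measure Ω} [NormedAddCommGroup E]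
  [InnerProductSpace ℝ E] [CompleteSpace E] {g G : Ω → E} {ζ Q Qm : ℝ}

theorem mul_integral_sq_norm_le [IsFiniteMeasure P]
    (h : IsStochasticLyapunovGradient P m g G ζ Q Qm) (hg : MemLp g 2 P) :
    ζ * ∫ ω, ‖g ω‖ ^ 2 ∂P ≤ ∫ ω, ⟪g ω, G ω⟫ ∂P := by
  rw [← integral_inner_condExp h.le h.stronglyMeasurable hg h.memLp, ← integral_const_mul]
  exact integral_mono_ae ((hg.integrable_norm_pow two_ne_zero).const_mul ζ)
    (integrable_inner_of_memLp_two hg (h.memLp.condExp one_le_two)) h.le_inner_condExp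

theorem integral_sq_norm_le [IsProbabilityMeasure P]
    (h : IsStochasticLyapunovGradient P m g G ζ Q Qm) (hg : MemLp g 2 P) :
    ∫ ω, ‖G ω‖ ^ 2 ∂P ≤ Q + Qm * ∫ ω, ‖g ω‖ ^ 2 ∂P := by
  have hsq : Integrable (fun ω => Qm * ‖g ω‖ ^ 2) P :=
    (hg.integrable_norm_pow two_ne_zero).const_mul Qm
  calc ∫ ω, ‖G ω‖ ^ 2 ∂P = ∫ ω, (P[fun ω' => ‖G ω'‖ ^ 2 | m]) ω ∂P :=
        (integral_condExp h.le).symm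
    _ ≤ ∫ ω, (Q + Qm * ‖g ω‖ ^ 2) ∂P :=
        integral_mono_ae integrable_condExp ((integrable_const Q).add hsq) h.condExp_sq_norm_le
    _ = Q + Qm * ∫ ω, ‖g ω‖ ^ 2 ∂P := by
        rw [integral_add (integrable_const Q) hsq, integral_const_mul, integral_const,
          probReal_univ, one_smul]

theorem integral_comp_sub_smul_le [IsProbabilityMeasure P] {V : E → ℝ} {K : ℝ≥0} {X : Ω → E} {a : ℝ}
    (h : IsStochasticLyapunovGradient P m (gradient V ∘ X) G ζ Q Qm) (hV : Differentiable ℝ V)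
    (hLip : LipschitzWith K (gradient V)) (hX : MemLp X 2 P) (ha : 0 ≤ a)
    (haζ : a * K * Qm ≤ ζ) :
    ∫ ω, V (X ω - a • G ω) ∂P ≤
      ∫ ω, V (X ω) ∂P - ζ / 2 * (a * ∫ ω, ‖gradient V (X ω)‖ ^ 2 ∂P)
        + K * Q / 2 * a ^ 2 := by
  have hgrad : MemLp (gradient V ∘ X) 2 P := memLp_comp_of_lipschitzWith hLip hX
  set S := ∫ ω, ‖gradient V (X ω)‖ ^ 2 ∂P
  have : 0 ≤ S := integral_nonneg fun ω => sq_nonneg _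
  calc ∫ ω, V (X ω - a • G ω) ∂P
      ≤ ∫ ω, V (X ω) ∂P - a * ∫ ω, ⟪gradient V (X ω), G ω⟫ ∂P
          + K / 2 * a ^ 2 * ∫ ω, ‖G ω‖ ^ 2 ∂P :=
        integral_comp_sub_smul_le_of_lipschitzWith_gradient hV hLip hX h.memLp a
    _ ≤ ∫ ω, V (X ω) ∂P - a * (ζ * S) + K / 2 * a ^ 2 * (Q + Qm * S) := by
        gcongr
        · exact h.mul_integral_sq_norm_le hgrad
        · exact h.integral_sq_norm_le hgrad
    _ = ∫ ω, V (X ω) ∂P - a * (ζ * S) + a * K * Qm * (a * S / 2) + K * Q / 2 * a ^ 2 := by ring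
    _ ≤ ∫ ω, V (X ω) ∂P - a * (ζ * S) + ζ * (a * S / 2) + K * Q / 2 * a ^ 2 := by gcongr
    _ = ∫ ω, V (X ω) ∂P - ζ / 2 * (a * S) + K * Q / 2 * a ^ 2 := by ring

end IsStochasticLyapunovGradient

section Descent

variable {E Ω : Type*} [NormedAddCommGroup E] [InnerProductSpace ℝ E] [CompleteSpace E]
  {m0 : MeasurableSpace Ω} {P : Measure Ω} [IsProbabilityMeasure P] {ℱ : ℕ → MeasurableSpace Ω}
  {V : E → ℝ} {K : ℝ≥0} {X G : ℕ → Ω → E} {ζ Q Qm : ℝ} {α : ℕ → ℝ}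

theorem sum_mul_integral_sq_norm_gradient_le
    (hG : ∀ k, 1 ≤ k → IsStochasticLyapunovGradient P (ℱ k) (gradient V ∘ X k) (G k) ζ Q Qm)
    (hV : Differentiable ℝ V) (hLip : LipschitzWith K (gradient V)) (hX1 : MemLp (X 1) 2 P)
    (hupdate : ∀ k, 1 ≤ k → ∀ᵐ ω ∂P, X (k + 1) ω = X k ω - α k • G k ω)
    (hα : ∀ k, 1 ≤ k → 0 ≤ α k) (hαζ : ∀ k, 1 ≤ k → α k * K * Qm ≤ ζ) (m : ℕ) :
    ζ / 2 * ∑ k ∈ Finset.Icc 1 m, α k * ∫ ω, ‖gradient V (X k ω)‖ ^ 2 ∂P ≤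
      ∫ ω, V (X 1 ω) ∂P - ∫ ω, V (X (m + 1) ω) ∂P
        + K * Q / 2 * ∑ k ∈ Finset.Icc 1 m, α k ^ 2 := by
  induction m with
  | zero => simp
  | succ m ih =>
    have hm : 1 ≤ m + 1 := Nat.le_add_left 1 m
    have hdescent := (hG (m + 1) hm).integral_comp_sub_smul_le hV hLip
      (memLp_of_ae_eq_sub_smul hX1 (fun k hk => (hG k hk).memLp) hupdate hm) (hα _ hm) (hαζ _ hm)
    have hnext : ∫ ω, V (X (m + 1 + 1) ω) ∂P =
        ∫ ω, V (X (m + 1) ω - α (m + 1) • G (m + 1) ω) ∂P :=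
      integral_congr_ae ((hupdate (m + 1) hm).mono fun _ hω => congrArg V hω)
    rw [Finset.sum_Icc_succ_top hm, Finset.sum_Icc_succ_top hm, hnext]
    linarith

theorem cdsgd_diminishing_step_nonconvex_general
    (hV : Differentiable ℝ V) (hLip : LipschitzWith K (gradient V))
    {Vinf : ℝ} (hbdd : ∀ x, Vinf ≤ V x) (hζ : 0 < ζ)
    (hα : ∀ k, 1 ≤ k → 0 ≤ α k) (hαζ : ∀ k, 1 ≤ k → α k * K * Qm ≤ ζ)
    (hX1 : MemLp (X 1) 2 P)
    (hupdate : ∀ k, 1 ≤ k → ∀ᵐ ω ∂P, X (k + 1) ω = X k ω - α k • G k ω)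
    (hG : ∀ k, 1 ≤ k → IsStochasticLyapunovGradient P (ℱ k) (gradient V ∘ X k) (G k) ζ Q Qm)
    (m : ℕ) :
    ∑ k ∈ Finset.Icc 1 m, α k * ∫ ω, ‖gradient V (X k ω)‖ ^ 2 ∂P ≤
      2 * (∫ ω, V (X 1 ω) ∂P - Vinf) / ζ + K * Q / ζ * ∑ k ∈ Finset.Icc 1 m, α k ^ 2 := by
  have hsum := sum_mul_integral_sq_norm_gradient_le hG hV hLip hX1 hupdate hα hαζ m
  have hXm : MemLp (X (m + 1)) 2 P :=
    memLp_of_ae_eq_sub_smul hX1 (fun k hk => (hG k hk).memLp) hupdate (Nat.le_add_left 1 m)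
  have hVinf : Vinf ≤ ∫ ω, V (X (m + 1) ω) ∂P := by
    simpa only [integral_const, probReal_univ, one_smul] using
      integral_mono (integrable_const Vinf) (integrable_comp_of_lipschitzWith_fderiv hV
        (lipschitzWith_fderiv_iff_lipschitzWith_gradient.2 hLip) hXm) fun ω => hbdd (X (m + 1) ω)
  rw [div_mul_eq_mul_div, ← add_div, le_div_iff₀ hζ]
  linarith

end Descent

/-- Theorem 4 (convergence of CDSGD with diminishing step size, nonconvex case):
`Σ_{k=1}^{m} α_k·E[‖∇V(X_k)‖²] ≤ 2·(V(x₁) − V_inf)/ζ₁ + (γ'·Q̂/ζ₁)·Σ_{k=1}^{m} α_k²`. -/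
theorem cdsgd_diminishing_step_nonconvex {N : ℕ} {Ω : Type*} {m0 : MeasurableSpace Ω}
    (P : Measure Ω) [IsProbabilityMeasure P] (ℱ : Filtration ℕ m0)
    (V : EuclideanSpace ℝ (Fin N) → ℝ) (γ' : ℝ) (hγ' : 0 < γ')
    (hdiff : Differentiable ℝ V)
    (hLip : LipschitzWith γ'.toNNReal (gradient V))
    (Vinf : ℝ) (hbdd : ∀ x, Vinf ≤ V x)
    (x₁ : EuclideanSpace ℝ (Fin N))
    (X G : ℕ → Ω → EuclideanSpace ℝ (Fin N))
    (ζ₁ Q Qm : ℝ) (hζ₁ : 0 < ζ₁) (hQ : 0 ≤ Q) (hQm : ζ₁ ^ 2 ≤ Qm)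
    (α : ℕ → ℝ) (hαpos : ∀ k, 1 ≤ k → 0 < α k)
    (hαmono : ∀ k l, 1 ≤ k → k ≤ l → α l ≤ α k)
    (hαle : ∀ k, 1 ≤ k → α k * γ' * Qm ≤ ζ₁)
    (hX1 : ∀ᵐ ω ∂P, X 1 ω = x₁)
    (hXmeas : ∀ k, StronglyMeasurable[ℱ k] (X k))
    (hGmeas : ∀ k, StronglyMeasurable[ℱ (k + 1)] (G k))
    (hGint : ∀ k, Integrable (fun ω => ‖G k ω‖ ^ 2) P)
    (hupdate : ∀ k, 1 ≤ k → ∀ ω, X (k + 1) ω = X k ω - α k • G k ω)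
    (hinner : ∀ k, 1 ≤ k → ∀ᵐ ω ∂P,
      ζ₁ * ‖gradient V (X k ω)‖ ^ 2 ≤ ⟪gradient V (X k ω), (P[G k|ℱ k]) ω⟫)
    (hsecond : ∀ k, 1 ≤ k → ∀ᵐ ω ∂P,
      (P[(fun ω' => ‖G k ω'‖ ^ 2)|ℱ k]) ω ≤ Q + Qm * ‖gradient V (X k ω)‖ ^ 2) :
    ∀ m : ℕ, 1 ≤ m →
      (∑ k ∈ Finset.Icc 1 m, α k * ∫ ω, ‖gradient V (X k ω)‖ ^ 2 ∂P) ≤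
        2 * (V x₁ - Vinf) / ζ₁ + γ' * Q / ζ₁ * ∑ k ∈ Finset.Icc 1 m, (α k) ^ 2 := by
  lift γ' to ℝ≥0 using hγ'.le
  rw [Real.toNNReal_coe] at hLip
  intro m _
  have hX1mem : MemLp (X 1) 2 P := (memLp_const x₁).ae_eq (EventuallyEq.symm hX1)
  have hG (k : ℕ) (hk : 1 ≤ k) :
      IsStochasticLyapunovGradient P (ℱ k) (gradient V ∘ X k) (G k) ζ₁ Q Qm :=
    { le := ℱ.le k
      stronglyMeasurable := hLip.continuous.comp_stronglyMeasurable (hXmeas k)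
      memLp := (memLp_two_iff_integrable_sq_norm
        ((hGmeas k).mono (ℱ.le _)).aestronglyMeasurable).2 (hGint k)
      le_inner_condExp := hinner k hk
      condExp_sq_norm_le := hsecond k hk }
  simpa only [integral_comp_of_ae_eq_const V hX1] using
    cdsgd_diminishing_step_nonconvex_general hdiff hLip hbdd hζ₁ (fun k hk => (hαpos k hk).le)
      hαle hX1mem (fun k hk => ae_of_all P (hupdate k hk)) hG m
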